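/- arXiv:1009.4136 — 2 statements merged into one kernel-verified Lean document; each statement's English description precedes it below -/
import Mathlib

section
/- Let G be a finite group, H ≤ G a subgroup, and let ρ be an irreducible complex representation of G chosen according to the Plancherel measure. With X_H = ⟨Res_H χ_ρ, 1⟩_H / d_ρ, the variance satisfies Var_ρ[X_H] ≤ (1/|H|) · Σ_{h ∈ H, h ≠ 1} 1/|h^G|, where h^G denotes the conjugacy class of h in G. -/
/-!
Write `m_ρ = ⟨Res_H χ_ρ, 1⟩_H` and let `π` be the permutation character of `G ⧸ H`. Maschke's theorem
(`character_mem_span`) and Frobenius reciprocity (`sum_card_conj_mul_character`) give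
`π = ∑_ρ m_ρ χ_ρ` (`card_conj_mem_eq_sum`). This single identity yields both moments.

* At `g = 1` it reads `∑_ρ m_ρ d_ρ = |G| / |H|`, so `E[X_H] = 1 / |H|`.
* Averaged over `g ∈ H` it reads `∑_ρ m_ρ² = |H|⁻¹ ∑_{h ∈ H} π(h)`, so
  `E[X_H²] = (|G| |H|)⁻¹ ∑_{h ∈ H} π(h)`.

The term `h = 1` of the second moment is `1 / |H|²`, the square of the mean. For the other terms,
`|H| π(h) = #{y | y⁻¹ h y ∈ H} = |C_G(h)| |h^G ∩ H| ≤ |H| |G| / |h^G|`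
(`card_mul_card_fixed`, `card_conj_mem_mul_le`). To avoid divisions, the lemmas are stated for
`|H| π(g)` in the form `#{y | y⁻¹ g y ∈ H}`.
-/

open CategoryTheory
open scoped Classical

/-! ### Characters of arbitrary representations -/

/-- Passage from the lattice-theoretic notion of irreducibility to the categorical one, through
the norm-one criterion for characters. -/
theorem simple_of_isIrreducible {G : Type} [Group G] [Fintype G] {V : Type} [AddCommGroup V]
    [Module ℂ V] [FiniteDimensional ℂ V] (τ : Representation ℂ G V) [τ.IsIrreducible] :
    Simple (FDRep.of τ) := by
  have hG : (Nat.card G : ℂ) ≠ 0 := by exact_mod_cast Nat.card_pos.ne'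
  let _ : Invertible (Nat.card G : ℂ) := invertibleOfNonzero hG
  rw [FDRep.simple_iff_char_is_norm_one]
  have h := Representation.char_orthonormal τ τ
  rw [if_pos ⟨Representation.Equiv.refl τ⟩, inv_mul_eq_one₀ hG] at h
  exact h.symm

theorem character_eq_add_of_isCompl {G : Type} [Group G] {V : Type} [AddCommGroup V]
    [Module ℂ V] [FiniteDimensional ℂ V] (τ : Representation ℂ G V)
    {p q : Subrepresentation τ} (h : IsCompl p.toSubmodule q.toSubmodule) (g : G) :
    τ.character g = p.toRepresentation.character g + q.toRepresentation.character g := by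
  unfold Representation.character
  rw [← LinearMap.trace_prodMap', ← LinearMap.trace_conj' _
    (Submodule.prodEquivOfIsCompl _ _ h)]
  congr 1
  refine LinearMap.ext fun v => ?_
  obtain ⟨x, rfl⟩ := (Submodule.prodEquivOfIsCompl _ _ h).surjective v
  simp [LinearEquiv.conj_apply, Subrepresentation.toRepresentation]

/-- By Maschke's theorem, every character is a linear combination of the irreducible ones. The
induction is on the dimension `n`, splitting a reducible representation into two smaller ones. -/
theorem character_mem_span {G : Type} [Group G] [Fintype G]
    {ι : Type} [Fintype ι] (ρ : ι → FDRep ℂ G)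
    (hcomplete : ∀ V : FDRep ℂ G, Simple V → ∃ i, Nonempty (V ≅ ρ i)) (n : ℕ) :
    ∀ (V : Type) [AddCommGroup V] [Module ℂ V] [FiniteDimensional ℂ V]
      (τ : Representation ℂ G V), Module.finrank ℂ V = n →
      ∃ c : ι → ℂ, ∀ g, τ.character g = ∑ i, c i * (ρ i).character g := by
  induction n using Nat.strong_induction_on with
  | _ n ih =>
  intro V _ _ _ τ hV
  rcases subsingleton_or_nontrivial V with hs | hn
  · exact ⟨0, fun g => by simp [Representation.character, Subsingleton.elim (τ g) 0]⟩
  have : Nontrivial (Subrepresentation τ) :=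
    ⟨⊥, ⊤, fun h => bot_ne_top (congrArg Subrepresentation.toSubmodule h :
      (⊥ : Submodule ℂ V) = ⊤)⟩
  by_cases hirr : τ.IsIrreducible
  · obtain ⟨i, ⟨e⟩⟩ := hcomplete _ (simple_of_isIrreducible τ)
    refine ⟨Pi.single i 1, fun g => ?_⟩
    have := congrFun (FDRep.char_iso e) g
    simp only [Pi.single_apply, ite_mul, one_mul, zero_mul, Finset.sum_ite_eq', Finset.mem_univ,
      if_true, ← this]
    rfl
  · obtain ⟨p, hp0, hp1⟩ : ∃ p : Subrepresentation τ, p ≠ ⊥ ∧ p ≠ ⊤ := by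
      by_contra! hcon
      exact hirr ⟨fun p => or_iff_not_imp_left.2 (hcon p)⟩
    have : NeZero (Nat.card G : ℂ) := ⟨by exact_mod_cast Nat.card_pos.ne'⟩
    obtain ⟨q, hq⟩ := exists_isCompl p
    have hc : IsCompl p.toSubmodule q.toSubmodule := by
      refine IsCompl.of_eq ?_ ?_
      · rw [← Subrepresentation.toSubmodule_inf, hq.inf_eq_bot]; rfl
      · rw [← Subrepresentation.toSubmodule_sup, hq.sup_eq_top]; rfl
    have hsum := Submodule.finrank_add_eq_of_isCompl hc
    have hp : 0 < Module.finrank ℂ p.toSubmodule := by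
      rw [Nat.pos_iff_ne_zero, Ne, Submodule.finrank_eq_zero]
      exact fun h => hp0 (Subrepresentation.toSubmodule_injective h)
    have hpl : Module.finrank ℂ p.toSubmodule < Module.finrank ℂ V :=
      Submodule.finrank_lt fun h => hp1 (Subrepresentation.toSubmodule_injective h)
    obtain ⟨c, hcp⟩ := ih _ (by omega) _ p.toRepresentation rfl
    obtain ⟨d, hdq⟩ := ih _ (by omega) _ q.toRepresentation rfl
    refine ⟨c + d, fun g => ?_⟩
    rw [character_eq_add_of_isCompl τ hc, hcp, hdq, ← Finset.sum_add_distrib]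
    simp [add_mul]

/-! ### Counting in the permutation representation -/

theorem character_ofMulAction {G X : Type} [Group G] [Fintype X] [MulAction G X] (g : G) :
    (Representation.ofMulAction ℂ G X).character g =
      ((Finset.univ.filter fun x : X => g • x = x).card : ℂ) := by
  unfold Representation.character
  rw [LinearMap.trace_eq_matrix_trace ℂ (Module.Basis.ofRepr (MonoidAlgebra.coeffLinearEquiv ℂ)),
    Matrix.trace, Finset.card_filter]
  push_cast
  refine Finset.sum_congr rfl fun x _ => ?_
  have : g⁻¹ • x = x ↔ g • x = x := by rw [inv_smul_eq_iff, eq_comm]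
  simp [LinearMap.toMatrix_apply, Finsupp.single_apply]

/-- The coset `yH` is fixed by `g` exactly when `y⁻¹ g y ∈ H`, and each coset has `|H|`
representatives `y`. -/
theorem card_mul_card_fixed {G : Type} [Group G] [Fintype G] (H : Subgroup G) (g : G) :
    Fintype.card H * (Finset.univ.filter fun x : G ⧸ H => g • x = x).card =
      (Finset.univ.filter fun y : G => y⁻¹ * g * y ∈ H).card := by
  have key : ∀ y : G, y⁻¹ * g * y ∈ H ↔ g • (y : G ⧸ H) = y := by
    intro y
    rw [eq_comm, MulAction.Quotient.smul_coe, QuotientGroup.eq, smul_eq_mul, mul_assoc]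
  rw [Finset.card_eq_sum_card_fiberwise (f := fun y : G => (y : G ⧸ H))
    (t := Finset.univ.filter fun x : G ⧸ H => g • x = x) (by
      intro y hy; simpa [key] using hy), Finset.sum_const_nat (m := Fintype.card H), mul_comm]
  intro x hx
  obtain ⟨z, rfl⟩ := QuotientGroup.mk_surjective x
  rw [← Finset.card_univ]
  symm
  refine Finset.card_bij (fun h _ => z * (h : G)) ?_ ?_ ?_
  · intro h _
    have : ((z * (h : G) : G) : G ⧸ H) = z := by simp
    simp only [Finset.mem_filter, Finset.mem_univ, true_and, key, this] at hx ⊢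
    exact ⟨hx, trivial⟩
  · intro a _ b _ h; simpa using h
  · intro y hy
    simp only [Finset.mem_filter, Finset.mem_univ, true_and] at hy
    exact ⟨⟨z⁻¹ * y, QuotientGroup.eq.1 hy.2.symm⟩, Finset.mem_univ _, by simp⟩

/-- The map `y ↦ y⁻¹ g y` has all its fibres over `g^G` of size `|C_G(g)| = |G| / |g^G|`, and at
most `|H|` of these fibres lie over `H`. -/
theorem card_conj_mem_mul_le {G : Type} [Group G] [Fintype G] (H : Subgroup G) (g : G) :
    (Finset.univ.filter fun y : G => y⁻¹ * g * y ∈ H).card *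
      Fintype.card {x : G // IsConj g x} ≤ Fintype.card H * Fintype.card G := by
  set C := (Finset.univ.filter fun y : G => y⁻¹ * g * y = g).card with hC
  have fib : ∀ z : G, (Finset.univ.filter fun y : G => y⁻¹ * g * y = z⁻¹ * g * z).card = C := by
    intro z
    refine Finset.card_bij (fun y _ => y * z⁻¹) ?_ ?_ ?_
    · intro y hy
      simp only [Finset.mem_filter, Finset.mem_univ, true_and] at hy ⊢
      calc (y * z⁻¹)⁻¹ * g * (y * z⁻¹) = z * (y⁻¹ * g * y) * z⁻¹ := by group
        _ = g := by rw [hy]; group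
    · intro a _ b _ h; simpa using h
    · intro y hy
      simp only [Finset.mem_filter, Finset.mem_univ, true_and] at hy
      refine ⟨y * z, ?_, by simp⟩
      simp only [Finset.mem_filter, Finset.mem_univ, true_and]
      calc (y * z)⁻¹ * g * (y * z) = z⁻¹ * (y⁻¹ * g * y) * z := by group
        _ = _ := by rw [hy]
  have h1 : Fintype.card {x : G // IsConj g x} * C = Fintype.card G := by
    rw [← Finset.card_univ (α := G), Finset.card_eq_sum_card_fiberwise
      (f := fun y : G => y⁻¹ * g * y) (t := Finset.univ.filter fun x => IsConj g x) (by
        intro y _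
        simp only [Finset.coe_filter, Finset.mem_univ, true_and, Set.mem_ofPred_eq]
        exact isConj_iff.2 ⟨y⁻¹, by simp⟩),
      Finset.sum_const_nat (m := C), Fintype.card_subtype]
    intro x hx
    simp only [Finset.mem_filter, Finset.mem_univ, true_and] at hx
    obtain ⟨c, rfl⟩ := isConj_iff.1 hx
    simpa using fib c⁻¹
  have h2 : (Finset.univ.filter fun y : G => y⁻¹ * g * y ∈ H).card ≤ Fintype.card H * C := by
    rw [Finset.card_eq_sum_card_fiberwise (f := fun y : G => y⁻¹ * g * y)
      (t := Finset.univ.filter fun x => x ∈ H) (by intro y hy; simpa using hy),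
      Fintype.card_subtype (fun x => x ∈ H), ← smul_eq_mul]
    refine Finset.sum_le_card_nsmul _ _ _ fun x _ => ?_
    by_cases hx : ∃ z : G, z⁻¹ * g * z = x
    · obtain ⟨z, rfl⟩ := hx
      rw [← fib z]
      exact Finset.card_le_card (Finset.filter_subset_filter _ (Finset.filter_subset _ _))
    · rw [Finset.filter_eq_empty_iff.2 fun y _ hy => hx ⟨y, hy⟩]
      simp
  calc _ ≤ Fintype.card H * C * Fintype.card {x : G // IsConj g x} := Nat.mul_le_mul_right _ h2
    _ = _ := by rw [← h1]; ring

/-! ### Decomposition of the permutation character -/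

/-- Frobenius reciprocity: after division by `|G| |H|`, the inner product of the permutation
character of `G ⧸ H` with `χ_V` is the multiplicity of the trivial representation in `Res_H V`. -/
theorem sum_card_conj_mul_character {G : Type} [Group G] [Fintype G] (H : Subgroup G)
    (V : FDRep ℂ G) :
    ∑ g : G, ((Finset.univ.filter fun y : G => y⁻¹ * g * y ∈ H).card : ℂ) * V.character g⁻¹ =
      Fintype.card G * ∑ h : H, V.character (h : G) := by
  have inner : ∀ y : G, ∑ g : G, (if y⁻¹ * g * y ∈ H then V.character g⁻¹ else 0) =
      ∑ h : H, V.character (h : G) := by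
    intro y
    rw [← (MulAut.conj y).toEquiv.sum_comp]
    have : ∀ k : G, (if y⁻¹ * ((MulAut.conj y).toEquiv k) * y ∈ H then
        V.character ((MulAut.conj y).toEquiv k)⁻¹ else 0) =
        if k ∈ H then V.character k⁻¹ else 0 := by
      intro k
      have h1 : y⁻¹ * (y * k * y⁻¹) * y = k := by group
      have h2 : (y * k * y⁻¹)⁻¹ = y * k⁻¹ * y⁻¹ := by group
      simp only [MulEquiv.toEquiv_eq_coe, MulEquiv.coe_toEquiv, MulAut.conj_apply, h1, h2,
        FDRep.char_conj]
    simp_rw [this]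
    rw [← Finset.sum_filter, Finset.sum_subtype (p := fun k => k ∈ H) _ (by simp),
      ← Equiv.sum_comp (Equiv.inv H)]
    simp
  simp_rw [Finset.card_filter, Nat.cast_sum, Finset.sum_mul]
  rw [Finset.sum_comm]
  simp only [Nat.cast_ite, Nat.cast_one, Nat.cast_zero, ite_mul, one_mul, zero_mul, inner]
  simp

/-- The multiplicity of the trivial representation in `Res_H V` is a natural number, namely the
dimension of the space of `H`-invariants; in particular it is real. -/
theorem exists_nat_multiplicity {G : Type} [Group G] [Fintype G] (H : Subgroup G)
    (V : FDRep ℂ G) :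
    ∃ m : ℕ, (Fintype.card H : ℂ)⁻¹ * ∑ h : H, V.character (h : G) = m := by
  have hH : (Nat.card H : ℂ) ≠ 0 := by exact_mod_cast Nat.card_pos.ne'
  let _ : Invertible (Nat.card H : ℂ) := invertibleOfNonzero hH
  rw [← Nat.card_eq_fintype_card]
  exact ⟨_, Representation.card_inv_mul_sum_char_eq_finrank
    (show Representation ℂ H V from V.ρ.comp H.subtype)⟩

theorem finrank_ne_zero_of_simple {G : Type} [Group G] [Fintype G] (V : FDRep ℂ G)
    (hV : Simple V) : Module.finrank ℂ V ≠ 0 := by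
  intro h0
  have := (FDRep.simple_iff_char_is_norm_one V).1 hV
  have hs : Subsingleton V := Module.finrank_zero_iff.1 h0
  have hz : ∀ g, V.character g = 0 := fun g => by
    simp [FDRep.character, Subsingleton.elim (V.ρ g) 0]
  simp only [hz, mul_zero, Finset.sum_const_zero] at this
  exact (Nat.card_pos (α := G)).ne (by exact_mod_cast this)

/-- Decomposition of the permutation character of `G ⧸ H` (scaled by `|H|`) into irreducible
characters: the multiplicity of `ρ i` is that of the trivial representation in `Res_H (ρ i)`. -/
theorem card_conj_mem_eq_sum {G : Type} [Group G] [Fintype G]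
    (ι : Type) [Fintype ι] (ρ : ι → FDRep ℂ G)
    (hirr : ∀ i, Simple (ρ i))
    (hdisj : ∀ i j : ι, Nonempty (ρ i ≅ ρ j) → i = j)
    (hcomplete : ∀ V : FDRep ℂ G, Simple V → ∃ i, Nonempty (V ≅ ρ i))
    (H : Subgroup G) (g : G) :
    ((Finset.univ.filter fun y : G => y⁻¹ * g * y ∈ H).card : ℂ) =
      ∑ i, (∑ h : H, (ρ i).character (h : G)) * (ρ i).character g := by
  have hG : (Nat.card G : ℂ) ≠ 0 := by exact_mod_cast Nat.card_pos.ne'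
  let _ : Invertible (Nat.card G : ℂ) := invertibleOfNonzero hG
  obtain ⟨c, hc⟩ := character_mem_span ρ hcomplete _ _
    (Representation.ofMulAction ℂ G (G ⧸ H)) rfl
  have hP : ∀ g : G, ((Finset.univ.filter fun y : G => y⁻¹ * g * y ∈ H).card : ℂ) =
      ∑ i, (Fintype.card H * c i) * (ρ i).character g := by
    intro g
    have hfix : ((Finset.univ.filter fun x : G ⧸ H => g • x = x).card : ℂ) =
        ∑ i, c i * (ρ i).character g := by
      rw [← hc, character_ofMulAction]
      congr!
    rw [← card_mul_card_fixed, Nat.cast_mul, hfix, Finset.mul_sum]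
    simp only [mul_assoc]
  rw [hP g]
  refine Finset.sum_congr rfl fun j _ => ?_
  congr 1
  -- Pairing with `χ_j` isolates the `j`-th coefficient.
  have h := sum_card_conj_mul_character H (ρ j)
  simp_rw [hP, Finset.sum_mul] at h
  rw [Finset.sum_comm] at h
  have orth : ∀ i, ∑ g : G, (ρ i).character g * (ρ j).character g⁻¹ =
      if i = j then (Nat.card G : ℂ) else 0 := by
    intro i
    have := hirr i
    have := hirr j
    have h := FDRep.char_orthonormal (ρ i) (ρ j)
    rw [inv_mul_eq_iff_eq_mul₀ hG] at h
    have hiff : Nonempty (ρ i ≅ ρ j) ↔ i = j :=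
      ⟨hdisj i j, fun h => h ▸ ⟨Iso.refl _⟩⟩
    rw [h]
    simp [hiff]
  simp_rw [mul_assoc, ← Finset.mul_sum, orth] at h
  rw [Nat.card_eq_fintype_card] at hG
  simp only [mul_ite, mul_zero, Finset.sum_ite_eq', Finset.mem_univ, if_true,
    Nat.card_eq_fintype_card] at h
  refine mul_left_cancel₀ hG ?_
  rw [← h]
  ring

/-! ### The variance bound -/

/-- For a finite group `G`, a complete family of pairwise non-isomorphic
irreducible complex representations, a subgroup `H ≤ G`, and the real-valued random
variable `X_H = ⟨Res_H χ_ρ, 1⟩_H / d_ρ`, the variance over the Plancherel measure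
satisfies `Var_ρ[X_H] ≤ (1/|H|) · Σ_{h ∈ H, h ≠ 1} 1/|h^G|`. -/
theorem plancherel_variance_le_of_trivial_multiplicity_fraction
    {G : Type} [Group G] [Fintype G]
    (ι : Type) [Fintype ι] (ρ : ι → FDRep ℂ G)
    (hirr : ∀ i, Simple (ρ i))
    (hdisj : ∀ i j : ι, Nonempty (ρ i ≅ ρ j) → i = j)
    (hcomplete : ∀ V : FDRep ℂ G, Simple V → ∃ i, Nonempty (V ≅ ρ i))
    (H : Subgroup G) :
    (∑ i : ι, ((Module.finrank ℂ (ρ i) : ℝ) ^ 2 / (Fintype.card G : ℝ)) *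
        ((((Fintype.card H : ℂ)⁻¹ * ∑ h : H, (ρ i).character (h : G)) /
          (Module.finrank ℂ (ρ i) : ℂ)).re ^ 2))
      - (∑ i : ι, ((Module.finrank ℂ (ρ i) : ℝ) ^ 2 / (Fintype.card G : ℝ)) *
          (((Fintype.card H : ℂ)⁻¹ * ∑ h : H, (ρ i).character (h : G)) /
            (Module.finrank ℂ (ρ i) : ℂ)).re) ^ 2
      ≤ (Fintype.card H : ℝ)⁻¹ *
          ∑ h ∈ Finset.univ.filter (fun h : H => (h : G) ≠ 1),
            (1 : ℝ) / (Fintype.card {x : G // IsConj (h : G) x} : ℝ) := by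
  choose m hm using fun i => exists_nat_multiplicity H (ρ i)
  have hH : (Fintype.card H : ℝ) ≠ 0 := by exact_mod_cast Fintype.card_ne_zero
  have hG : (Fintype.card G : ℝ) ≠ 0 := by exact_mod_cast Fintype.card_ne_zero
  have hHC : (Fintype.card H : ℂ) ≠ 0 := by exact_mod_cast Fintype.card_ne_zero
  have hGpos : (0 : ℝ) < Fintype.card G := by exact_mod_cast Fintype.card_pos
  have hHpos : (0 : ℝ) < Fintype.card H := by exact_mod_cast Fintype.card_pos
  have hd : ∀ i, (Module.finrank ℂ (ρ i) : ℝ) ≠ 0 := fun i => by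
    exact_mod_cast finrank_ne_zero_of_simple _ (hirr i)
  have hS : ∀ i, ∑ h : H, (ρ i).character (h : G) = Fintype.card H * (m i : ℂ) := fun i => by
    rw [← hm i, mul_inv_cancel_left₀ hHC]
  have hX : ∀ i, ((m i : ℂ) / (Module.finrank ℂ (ρ i) : ℂ)).re =
      (m i : ℝ) / (Module.finrank ℂ (ρ i) : ℝ) := fun i => by
    rw [← Complex.ofReal_re ((m i : ℝ) / (Module.finrank ℂ (ρ i) : ℝ))]
    push_cast
    rfl
  have hP := card_conj_mem_eq_sum ι ρ hirr hdisj hcomplete H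
  set P : G → ℕ := fun g => (Finset.univ.filter fun y : G => y⁻¹ * g * y ∈ H).card with hPdef
  have hP1 : P 1 = Fintype.card G := by simp [hPdef, H.one_mem]
  -- Evaluation of the permutation character at `1`.
  have hmean : ∑ i, (Module.finrank ℂ (ρ i) : ℝ) * m i =
      Fintype.card G / Fintype.card H := by
    have h := hP 1
    change ((P 1 : ℕ) : ℂ) = _ at h
    rw [hP1] at h
    simp only [hS, FDRep.char_one] at h
    rw [eq_div_iff hH, Finset.sum_mul]
    have h' : (Fintype.card G : ℝ) =
        ∑ i, (Fintype.card H * (m i : ℝ)) * (Module.finrank ℂ (ρ i) : ℝ) := by exact_mod_cast h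
    rw [h']
    exact Finset.sum_congr rfl fun i _ => by ring
  -- Summation of the permutation character over `H`.
  have hsq : ∑ i, (m i : ℝ) ^ 2 = (∑ h : H, (P h : ℝ)) / (Fintype.card H : ℝ) ^ 2 := by
    have h : ∑ h : H, (P h : ℂ) = ∑ i, (Fintype.card H * (m i : ℂ)) ^ 2 := by
      calc ∑ h : H, (P h : ℂ)
          = ∑ h : H, ∑ i, (Fintype.card H * (m i : ℂ)) * (ρ i).character (h : G) :=
            Finset.sum_congr rfl fun h _ => by simp only [← hS]; exact hP h
        _ = _ := by
            rw [Finset.sum_comm]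
            exact Finset.sum_congr rfl fun i _ => by rw [← Finset.mul_sum, hS, sq]
    have h' : ∑ h : H, (P h : ℝ) = ∑ i, (Fintype.card H * (m i : ℝ)) ^ 2 := by exact_mod_cast h
    rw [h', eq_div_iff (pow_ne_zero 2 hH), Finset.sum_mul]
    exact Finset.sum_congr rfl fun i _ => by ring
  have hE1 : ∑ i : ι, ((Module.finrank ℂ (ρ i) : ℝ) ^ 2 / (Fintype.card G : ℝ)) *
      ((m i : ℝ) / (Module.finrank ℂ (ρ i) : ℝ)) = (Fintype.card H : ℝ)⁻¹ := by
    have : ∀ i, ((Module.finrank ℂ (ρ i) : ℝ) ^ 2 / (Fintype.card G : ℝ)) *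
        ((m i : ℝ) / (Module.finrank ℂ (ρ i) : ℝ)) =
        (Module.finrank ℂ (ρ i) : ℝ) * m i / Fintype.card G := fun i => by
      have := hd i
      field_simp
    simp_rw [this]
    rw [← Finset.sum_div, hmean]
    field_simp
  have hE2 : ∑ i : ι, ((Module.finrank ℂ (ρ i) : ℝ) ^ 2 / (Fintype.card G : ℝ)) *
      ((m i : ℝ) / (Module.finrank ℂ (ρ i) : ℝ)) ^ 2 =
      (∑ h : H, (P h : ℝ)) / ((Fintype.card H : ℝ) ^ 2 * Fintype.card G) := by
    have : ∀ i, ((Module.finrank ℂ (ρ i) : ℝ) ^ 2 / (Fintype.card G : ℝ)) *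
        ((m i : ℝ) / (Module.finrank ℂ (ρ i) : ℝ)) ^ 2 =
        (m i : ℝ) ^ 2 / Fintype.card G := fun i => by
      have := hd i
      field_simp
    simp_rw [this]
    rw [← Finset.sum_div, hsq, div_div]
  simp_rw [hm, hX]
  rw [hE1, hE2]
  -- The term `h = 1` equals the squared mean and cancels.
  have hsplit : ∑ h : H, (P h : ℝ) = Fintype.card G +
      ∑ h ∈ Finset.univ.filter (fun h : H => (h : G) ≠ 1), (P h : ℝ) := by
    rw [← Finset.sum_filter_add_sum_filter_not Finset.univ (fun h : H => (h : G) = 1)]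
    congr 1
    have : Finset.univ.filter (fun h : H => (h : G) = 1) = {1} := by ext h; simp
    rw [this, Finset.sum_singleton, Subgroup.coe_one, hP1]
  rw [hsplit, add_div, Finset.sum_div, Finset.mul_sum]
  have h1 : (Fintype.card G : ℝ) / ((Fintype.card H : ℝ) ^ 2 * Fintype.card G) =
      ((Fintype.card H : ℝ)⁻¹) ^ 2 := by field_simp
  rw [h1, add_sub_cancel_left]
  refine Finset.sum_le_sum fun h _ => ?_
  have hb := card_conj_mem_mul_le H (h : G)
  have hb' : (P h : ℝ) * Fintype.card {x : G // IsConj (h : G) x} ≤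
      Fintype.card H * Fintype.card G := by exact_mod_cast hb
  have hK : (0 : ℝ) < Fintype.card {x : G // IsConj (h : G) x} := by
    have : Nonempty {x : G // IsConj (h : G) x} := ⟨⟨h, IsConj.refl _⟩⟩
    exact_mod_cast Fintype.card_pos
  rw [← one_div, div_mul_div_comm, one_mul, div_le_div_iff₀ (by positivity) (by positivity)]
  calc (P h : ℝ) * (Fintype.card H * Fintype.card {x : G // IsConj (h : G) x})
      = Fintype.card H * (P h * Fintype.card {x : G // IsConj (h : G) x}) := by ring
    _ ≤ Fintype.card H * (Fintype.card H * Fintype.card G) := by gcongr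
    _ = _ := by ring
end

section
/- Let K be a finite group with trivial center and G = Kⁿ. Let t and α > 0 satisfy 2|K|^t ≤ α√n. Let h₁, …, h_t be independent uniformly random elements of G, let H be the subgroup they generate, and let ρ be an irreducible complex representation of G chosen according to the Plancherel measure, independently of the hᵢ. With X_H = ⟨Res_H χ_ρ, 1⟩_H / d_ρ, we have Pr_{ρ, {hᵢ}}[X_H = 0] ≤ 2α/√n + (2^(−1/α) |K|^α)^(√n). -/
/-!
The proof is a second moment computation. Write `d_i = dim ρ_i` and let `m_i` be the multiplicity of
the trivial representation in the restriction of `ρ_i` to `H`. Where `m_i = 0` one has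
`d_i² = (d_i - |H| m_i)²`, so the mass of `{X_H = 0}` is at most `|G|⁻¹ ∑_i (d_i - |H| m_i)²`. Column
orthogonality, `∑_i χ_i(g) χ_i(h⁻¹) = #{x | x g x⁻¹ = h}` (`sum_char_mul_char`), evaluates this as
`|G|⁻¹ ∑_{1 ≠ g ∈ H} ∑_{h ∈ H} #{x | x g x⁻¹ = h}` (`plancherel_sum_le`). Orthogonality itself follows
from the fact that a class function orthogonal to all irreducible characters vanishes
(`classFunction_eq_zero`), a consequence of Schur's lemma and of the semisimplicity of `ℂ[G]`.

In `G = Kⁿ` with trivial center, each coordinate where `g` is nontrivial costs a factor of two, so the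
number of conjugators is at most `2 ^ (-|supp g|) |G|` (`card_conj_pi_le`). Let `c_j = (h_k(j))_k ∈ Kᵗ`
be the columns of the random tuple. Elements of `H` are functions of the column, hence
`|H| ≤ |K| ^ (|K|ᵗ)`, and the support of a nontrivial `g ∈ H` contains all `j` with a given column. If
every nontrivial element of `H` has support at least `√n / α`, the mass of `{X_H = 0}` is therefore at
most `|K| ^ (2 |K|ᵗ) 2 ^ (-√n / α)`, which is at most the second term `B` of the estimate because
`2 |K|ᵗ ≤ α √n`.

In the remaining case some column value has a fiber smaller than `√n / α`. Markov's inequality for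
`2 ^ (-N)`, with `N` the fiber size, and a union bound over `Kᵗ` give probability at most
`M 2 ^ x e ^ (-x)` with `M = |K|ᵗ` and `x = √n / α` (`card_bad_le`). This is at most `2α / √n` as soon
as `α² < 2 / 3`. One may assume `B < 1`, and then `α² < log 2 / log 3 < 2 / 3`, because a nontrivial
group with trivial center has at least three elements.
-/

open CategoryTheory
open scoped Classical

/-! ### Completeness of irreducible characters and column orthogonality -/

lemma simple_of_irreducible {G V : Type} [Group G] [Fintype G] [AddCommGroup V] [Module ℂ V]
    [FiniteDimensional ℂ V] (ρ : Representation ℂ G V) [ρ.IsIrreducible] :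
    Simple (FDRep.of ρ) := by
  have hc : (Nat.card G : ℂ) ≠ 0 := Nat.cast_ne_zero.mpr Nat.card_pos.ne'
  let _ := invertibleOfNonzero hc
  rw [FDRep.simple_iff_char_is_norm_one]
  have h := Representation.char_orthonormal ρ ρ
  rw [if_pos ⟨Representation.Equiv.refl ρ⟩, inv_mul_eq_one₀ hc] at h
  exact h.symm

/-- Schur's lemma makes the central element `∑ f(g) g⁻¹` act on an irreducible representation as a
scalar; that scalar vanishes because its trace, `∑ f(g) χ(g⁻¹)`, does. -/
lemma sum_smul_eq_zero_of_irreducible {G V : Type} [Group G] [Fintype G] [AddCommGroup V]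
    [Module ℂ V] [FiniteDimensional ℂ V] (ρ : Representation ℂ G V) [ρ.IsIrreducible]
    (f : G → ℂ) (hf : ∀ x g, f (x * g * x⁻¹) = f g)
    (h0 : ∑ g, f g * ρ.character g⁻¹ = 0) :
    ∑ g, f g • ρ g⁻¹ = 0 := by
  have hcomm : ∀ x, (∑ g, f g • ρ g⁻¹) ∘ₗ ρ x = ρ x ∘ₗ (∑ g, f g • ρ g⁻¹) := by
    intro x
    change (∑ g, f g • ρ g⁻¹) * ρ x = ρ x * (∑ g, f g • ρ g⁻¹)
    rw [Finset.sum_mul, Finset.mul_sum]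
    refine Fintype.sum_equiv (MulAut.conj x⁻¹).toEquiv _ _ fun g => ?_
    simp only [MulEquiv.toEquiv_eq_coe, MulEquiv.coe_toEquiv, MulAut.conj_apply, hf,
      smul_mul_assoc, mul_smul_comm, ← map_mul]
    simp [mul_assoc]
  let T : ρ.IntertwiningMap ρ := ⟨∑ g, f g • ρ g⁻¹, fun g => hcomm g⟩
  obtain ⟨c, hc⟩ := (Representation.IsIrreducible.algebraMap_intertwiningMap_bijective_of_isAlgClosed
    (ρ := ρ)).2 T
  have hT : (∑ g, f g • ρ g⁻¹) = c • LinearMap.id := by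
    have := congrArg (fun f => f.toLinearMap) hc
    exact this.symm
  have htr := congrArg (LinearMap.trace ℂ V) hT
  rw [map_sum] at htr
  simp only [map_smul, smul_eq_mul] at htr
  have hsub : Nontrivial V := by
    have := IsSimpleModule.nontrivial (MonoidAlgebra ℂ G) ρ.asModule
    exact this
  have : c * (Module.finrank ℂ V : ℂ) = 0 := by
    rw [← h0]
    simpa [Representation.character] using htr.symm
  have hc0 : c = 0 := by
    simpa [Module.finrank_pos.ne'] using this
  rw [hT, hc0, zero_smul]

/-- The same vanishing for an abstract simple `ℂ[G]`-module, which becomes an irreducible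
representation by restricting scalars to `ℂ`. -/
lemma smul_eq_zero_of_isSimpleModule {G : Type} [Group G] [Fintype G]
    (f : G → ℂ) (hf : ∀ x g, f (x * g * x⁻¹) = f g)
    (h0 : ∀ V : FDRep ℂ G, Simple V → ∑ g, f g * V.character g⁻¹ = 0)
    (M : Type) [AddCommGroup M] [Module (MonoidAlgebra ℂ G) M]
    [IsSimpleModule (MonoidAlgebra ℂ G) M] (v : M) :
    (∑ g, MonoidAlgebra.single g⁻¹ (f g) : MonoidAlgebra ℂ G) • v = 0 := by
  let _ : Module ℂ M := Module.compHom M (algebraMap ℂ (MonoidAlgebra ℂ G))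
  have hst : IsScalarTower ℂ (MonoidAlgebra ℂ G) M :=
    ⟨fun c a v => by rw [Algebra.smul_def, mul_smul]; rfl⟩
  let ρ : Representation ℂ G M := Representation.ofModule' M
  have hρ : ∀ a : MonoidAlgebra ℂ G, ∀ w : M, ρ.asAlgebraHom a w = a • w := by
    intro a w
    simp [ρ, Representation.ofModule', Representation.asAlgebraHom_def]
  let e : ρ.asModule ≃ₗ[MonoidAlgebra ℂ G] M :=
    { ρ.asModuleEquiv.toAddEquiv with
      map_smul' := fun a w => (ρ.asModuleEquiv_map_smul a w).trans (hρ a _) }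
  have hirr : ρ.IsIrreducible :=
    (Representation.irreducible_iff_isSimpleModule_asModule ρ).mpr (IsSimpleModule.congr e)
  have hA : Module.Finite ℂ (MonoidAlgebra ℂ G) :=
    Module.Finite.equiv (MonoidAlgebra.coeffLinearEquiv ℂ (M := G) (S := ℂ)).symm
  have hfin : FiniteDimensional ℂ M := Module.Finite.trans (MonoidAlgebra ℂ G) _
  have hT := sum_smul_eq_zero_of_irreducible ρ f hf (h0 _ (simple_of_irreducible ρ))
  rw [← hρ, map_sum]
  simpa [Representation.asAlgebraHom_single] using LinearMap.congr_fun hT v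

/-- A class function orthogonal to all irreducible characters is zero: the associated central element
of `ℂ[G]` annihilates every simple module, hence lies in the Jacobson radical, which is trivial by
Maschke's theorem. -/
lemma classFunction_eq_zero {G : Type} [Group G] [Fintype G]
    (f : G → ℂ) (hf : ∀ x g, f (x * g * x⁻¹) = f g)
    (h0 : ∀ V : FDRep ℂ G, Simple V → ∑ g, f g * V.character g⁻¹ = 0) : f = 0 := by
  set z : MonoidAlgebra ℂ G := ∑ g, MonoidAlgebra.single g⁻¹ (f g) with hz
  have hz0 : z = 0 := by
    have hmem : z ∈ Ring.jacobson (MonoidAlgebra ℂ G) := by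
      rw [Ring.jacobson, Module.jacobson, Submodule.mem_sInf]
      intro m hm
      have hs : IsSimpleModule (MonoidAlgebra ℂ G) (MonoidAlgebra ℂ G ⧸ m) :=
        isSimpleModule_iff_isCoatom.mpr hm
      have h1 := smul_eq_zero_of_isSimpleModule f hf h0 _ (m.mkQ 1)
      rw [← map_smul, smul_eq_mul, mul_one] at h1
      rwa [← Submodule.Quotient.mk_eq_zero m]
    rwa [IsSemisimpleRing.jacobson_eq_bot] at hmem
  funext g
  have := congrArg (fun w : MonoidAlgebra ℂ G => w.coeff g⁻¹) hz0
  simpa [hz, MonoidAlgebra.coeff_sum, Finsupp.single_apply] using this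

/-- Column orthogonality of the character table. The right-hand side is the order of the centralizer
of `g` when `g` and `h` are conjugate and `0` otherwise, written as the number of conjugators. -/
lemma sum_char_mul_char {G : Type} [Group G] [Fintype G] {ι : Type} [Fintype ι]
    (ρ : ι → FDRep ℂ G) (hirr : ∀ i, Simple (ρ i))
    (hdisj : ∀ i j : ι, Nonempty (ρ i ≅ ρ j) → i = j)
    (hcomplete : ∀ V : FDRep ℂ G, Simple V → ∃ i, Nonempty (V ≅ ρ i)) (g h : G) :
    ∑ i, (ρ i).character g * (ρ i).character h⁻¹ =
      ((Finset.univ.filter fun x : G => x * g * x⁻¹ = h).card : ℂ) := by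
  have hc : (Nat.card G : ℂ) ≠ 0 := Nat.cast_ne_zero.mpr Nat.card_pos.ne'
  let _ := invertibleOfNonzero hc
  have key := classFunction_eq_zero (fun g : G =>
    ((Finset.univ.filter fun x : G => x * g * x⁻¹ = h).card : ℂ) -
      ∑ i, (ρ i).character g * (ρ i).character h⁻¹) ?_ ?_
  · exact (sub_eq_zero.mp (congrFun key g)).symm
  · intro y g
    simp only [FDRep.char_conj]
    congr 2
    refine Finset.card_equiv (Equiv.mulRight y) fun x => ?_
    simp [mul_assoc]
  -- Both terms have inner product `|G| χ_j(h⁻¹)` with `χ_j`.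
  · intro V hV
    obtain ⟨j, ⟨e⟩⟩ := hcomplete V hV
    rw [FDRep.char_iso e]
    have horth : ∀ i, ∑ g : G, (ρ i).character g * (ρ j).character g⁻¹ =
        if i = j then (Nat.card G : ℂ) else 0 := by
      intro i
      have := hirr i
      have := hirr j
      have h1 := FDRep.char_orthonormal (ρ i) (ρ j)
      rw [inv_mul_eq_iff_eq_mul₀ hc] at h1
      rw [h1]
      by_cases hij : i = j
      · subst hij
        simp [Nonempty.intro (Iso.refl (ρ i))]
      · rw [if_neg (fun hn => hij (hdisj _ _ hn)), if_neg hij, mul_zero]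
    simp only [sub_mul, Finset.sum_sub_distrib, Finset.sum_mul, Finset.card_filter, Nat.cast_sum]
    rw [Finset.sum_comm, Finset.sum_comm (s := Finset.univ (α := G)) (t := Finset.univ (α := ι))]
    have h2 : ∀ i, ∑ g : G, (ρ i).character g * (ρ i).character h⁻¹ * (ρ j).character g⁻¹ =
        (ρ i).character h⁻¹ * if i = j then (Nat.card G : ℂ) else 0 := by
      intro i
      rw [← horth i, Finset.mul_sum]
      exact Finset.sum_congr rfl fun g _ => by ring
    have h3 : ∀ x : G, ∑ g : G, ((if x * g * x⁻¹ = h then 1 else 0 : ℕ) : ℂ) *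
        (ρ j).character g⁻¹ = (ρ j).character h⁻¹ := by
      intro x
      rw [Finset.sum_eq_single (x⁻¹ * h * x)]
      · have : (x⁻¹ * h * x)⁻¹ = x⁻¹ * h⁻¹ * x⁻¹⁻¹ := by group
        rw [this, FDRep.char_conj]
        simp [mul_assoc]
      · intro b _ hb
        rw [if_neg]
        · simp
        · rintro rfl
          apply hb
          group
      · simp
    simp only [h2, h3]
    simp [mul_comm]

/-! ### The second moment bound for a subgroup -/

/-- `m` is the multiplicity of the trivial representation in the restriction of `V` to `H`. -/
lemma sum_subgroup_char {G : Type} [Group G] [Fintype G] (V : FDRep ℂ G) (H : Subgroup G)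
    [Fintype H] : ∃ m : ℕ, ∑ x : H, V.character (x : G) = (Fintype.card H : ℂ) * m := by
  have hc : (Nat.card H : ℂ) ≠ 0 := Nat.cast_ne_zero.mpr Nat.card_pos.ne'
  let _ := invertibleOfNonzero hc
  have h := Representation.card_inv_mul_sum_char_eq_finrank
    (MonoidHom.comp V.ρ H.subtype : Representation ℂ H V)
  refine ⟨Module.finrank ℂ (Representation.invariants
    (MonoidHom.comp V.ρ H.subtype : Representation ℂ H V)), ?_⟩
  rw [inv_mul_eq_iff_eq_mul₀ hc, Nat.card_eq_fintype_card] at h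
  exact h

lemma sum_finrank_sq {G : Type} [Group G] [Fintype G] {ι : Type} [Fintype ι]
    (ρ : ι → FDRep ℂ G) (hirr : ∀ i, Simple (ρ i))
    (hdisj : ∀ i j : ι, Nonempty (ρ i ≅ ρ j) → i = j)
    (hcomplete : ∀ V : FDRep ℂ G, Simple V → ∃ i, Nonempty (V ≅ ρ i)) :
    ∑ i, (Module.finrank ℂ (ρ i) : ℝ) ^ 2 = Fintype.card G := by
  have h := sum_char_mul_char ρ hirr hdisj hcomplete 1 1
  simp only [inv_one, FDRep.char_one, mul_one, mul_inv_cancel, Finset.filter_true,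
    Finset.card_univ, ← pow_two] at h
  exact_mod_cast h

/-- Chebyshev-type bound. With `d_i = dim ρ_i` and `m_i` the trivial multiplicity on `H`, a
representation with `m_i = 0` contributes `d_i² = (d_i - |H| m_i)²`, and the sum of
`(d_i - |H| m_i)²` over all `i` is computed by column orthogonality. -/
lemma plancherel_sum_le {G : Type} [Group G] [Fintype G] {ι : Type} [Fintype ι]
    (ρ : ι → FDRep ℂ G) (hirr : ∀ i, Simple (ρ i))
    (hdisj : ∀ i j : ι, Nonempty (ρ i ≅ ρ j) → i = j)
    (hcomplete : ∀ V : FDRep ℂ G, Simple V → ∃ i, Nonempty (V ≅ ρ i))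
    (H : Subgroup G) [Fintype H] :
    ∑ i ∈ Finset.univ.filter (fun i : ι => ((Fintype.card H : ℂ)⁻¹ *
        ∑ x : H, (ρ i).character (x : G)) / (Module.finrank ℂ (ρ i) : ℂ) = 0),
          (Module.finrank ℂ (ρ i) : ℝ) ^ 2 ≤
      ∑ g ∈ (Finset.univ : Finset H).erase 1, ∑ h : H,
        ((Finset.univ.filter fun x : G => x * g * x⁻¹ = (h : G)).card : ℝ) := by
  set N : G → G → ℝ := fun g h => ((Finset.univ.filter fun x : G => x * g * x⁻¹ = h).card : ℝ)
    with hN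
  set d : ι → ℝ := fun i => (Module.finrank ℂ (ρ i) : ℝ) with hd
  choose m hm using fun i => sum_subgroup_char (ρ i) H
  have hH : (Fintype.card H : ℂ) ≠ 0 := Nat.cast_ne_zero.mpr Fintype.card_ne_zero
  have hm' : ∀ i, ∑ x : H, (ρ i).character (x : G)⁻¹ = (Fintype.card H : ℂ) * m i := by
    intro i
    rw [← hm i]
    exact Fintype.sum_equiv (Equiv.inv H) _ _ fun x => by simp
  have horth := sum_char_mul_char ρ hirr hdisj hcomplete
  have hN1 : ∀ h : G, N 1 h = if h = 1 then (Fintype.card G : ℝ) else 0 := by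
    intro h
    simp only [hN, mul_one, mul_inv_cancel]
    split_ifs with hh
    · simp [hh]
    · simp [Ne.symm hh]
  have hN1' : ∀ g : G, N g 1 = if g = 1 then (Fintype.card G : ℝ) else 0 := by
    intro h
    simp only [hN, mul_inv_eq_one, mul_eq_left]
    split_ifs with hh <;> simp [hh]
  have hdd : ∑ i, d i ^ 2 = Fintype.card G := sum_finrank_sq ρ hirr hdisj hcomplete
  have hdm : (Fintype.card H : ℝ) * ∑ i, d i * m i = Fintype.card G := by
    have : (((Fintype.card H : ℝ) * ∑ i, d i * m i : ℝ) : ℂ) =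
        ((∑ g : H, N g 1 : ℝ) : ℂ) := by
      push_cast
      simp only [hN]
      push_cast
      simp only [← horth]
      rw [Finset.sum_comm, Finset.mul_sum]
      refine Finset.sum_congr rfl fun i _ => ?_
      rw [← Finset.sum_mul, hm]
      simp [hd]
      ring
    have h3 : (∑ g : H, N g 1 : ℝ) = Fintype.card G := by
      simp [hN1']
    rw [h3] at this
    exact_mod_cast this
  have hmm : ∑ i, ((Fintype.card H : ℝ) * m i) ^ 2 = ∑ g : H, ∑ h : H, N g h := by
    have : ((∑ i, ((Fintype.card H : ℝ) * m i) ^ 2 : ℝ) : ℂ) =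
        ((∑ g : H, ∑ h : H, N g h : ℝ) : ℂ) := by
      simp only [hN]
      push_cast
      simp only [← horth]
      rw [Finset.sum_congr rfl fun g _ => Finset.sum_comm, Finset.sum_comm]
      refine Finset.sum_congr rfl fun i _ => ?_
      simp only [← Finset.mul_sum, hm', ← Finset.sum_mul, hm]
      ring
    exact_mod_cast this
  have hsplit : ∑ g : H, ∑ h : H, N g h =
      Fintype.card G + ∑ g ∈ (Finset.univ : Finset H).erase 1, ∑ h : H, N g h := by
    rw [← Finset.add_sum_erase _ _ (Finset.mem_univ (1 : H))]
    congr 1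
    simp [hN1]
  calc _ ≤ ∑ i ∈ Finset.univ.filter (fun i : ι => ((Fintype.card H : ℂ)⁻¹ *
        ∑ x : H, (ρ i).character (x : G)) / (Module.finrank ℂ (ρ i) : ℂ) = 0),
          (d i - Fintype.card H * m i) ^ 2 := by
        refine Finset.sum_le_sum fun i hi => ?_
        rw [Finset.mem_filter, hm, inv_mul_cancel_left₀ hH, div_eq_zero_iff] at hi
        rcases hi.2 with h | h
        · rw [Nat.cast_eq_zero.mp h]
          simp [hd]
        -- The junk value `x / 0 = 0` puts any `ρ i` of dimension `0` in the filter; its term is `0`.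
        · rw [Nat.cast_eq_zero.mp h]
          simpa using sq_nonneg _
    _ ≤ ∑ i, (d i - Fintype.card H * m i) ^ 2 :=
        Finset.sum_le_sum_of_subset_of_nonneg (Finset.filter_subset _ _)
          fun _ _ _ => sq_nonneg _
    _ = ∑ i, d i ^ 2 - 2 * (Fintype.card H * ∑ i, d i * m i) +
          ∑ i, ((Fintype.card H : ℝ) * m i) ^ 2 := by
        rw [Finset.mul_sum, Finset.mul_sum, ← Finset.sum_sub_distrib, ← Finset.sum_add_distrib]
        exact Finset.sum_congr rfl fun i _ => by ring
    _ = _ := by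
        rw [hdd, hdm, hmm, hsplit]
        ring

/-! ### Conjugators and generated subgroups in `Kⁿ` -/

/-- The conjugators from `a` to `b`, if any, form a coset of the centralizer of `a`, a proper subgroup
when `a ≠ 1` and the center is trivial: translating by some `u` not commuting with `a` gives a
disjoint copy. -/
lemma two_mul_card_conj_le {K : Type} [Group K] [Fintype K] (hZ : Subgroup.center K = ⊥)
    {a : K} (ha : a ≠ 1) (b : K) :
    2 * (Finset.univ.filter fun x : K => x * a * x⁻¹ = b).card ≤ Fintype.card K := by
  obtain ⟨u, hu⟩ : ∃ u : K, u * a ≠ a * u := by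
    by_contra! h
    have : a ∈ Subgroup.center K := Subgroup.mem_center_iff.mpr h
    rw [hZ, Subgroup.mem_bot] at this
    exact ha this
  set A := Finset.univ.filter fun x : K => x * a * x⁻¹ = b with hA
  have hdisj : Disjoint A (A.map (Equiv.mulRight u).toEmbedding) := by
    rw [Finset.disjoint_left]
    intro x hx hx'
    obtain ⟨y, hy, rfl⟩ := Finset.mem_map.mp hx'
    simp only [hA, Finset.mem_filter, Finset.mem_univ, true_and, Equiv.coe_toEmbedding,
      Equiv.coe_mulRight] at hx hy
    rw [← hy, mul_inv_rev] at hx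
    apply hu
    have h2 : u * a * u⁻¹ = a := by
      have : y * (u * a * u⁻¹) * y⁻¹ = y * a * y⁻¹ := by
        rw [← hx]; group
      exact mul_left_cancel (mul_right_cancel this)
    exact mul_inv_eq_iff_eq_mul.mp h2
  have := Finset.card_le_univ (A ∪ A.map (Equiv.mulRight u).toEmbedding)
  rw [Finset.card_union_of_disjoint hdisj, Finset.card_map] at this
  omega

lemma card_conj_pi_le {K : Type} [Group K] [Fintype K] (hZ : Subgroup.center K = ⊥) {n : ℕ}
    (g h : Fin n → K) :
    2 ^ (Finset.univ.filter fun j => g j ≠ 1).card *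
      (Finset.univ.filter fun x : Fin n → K => x * g * x⁻¹ = h).card ≤
        Fintype.card (Fin n → K) := by
  have h1 : (Finset.univ.filter fun x : Fin n → K => x * g * x⁻¹ = h) =
      Fintype.piFinset fun j => Finset.univ.filter fun x : K => x * g j * x⁻¹ = h j := by
    ext x
    simp [funext_iff]
  rw [h1, Fintype.card_piFinset, Finset.card_filter, ← Finset.prod_pow_eq_pow_sum,
    ← Finset.prod_mul_distrib, Fintype.card_pi]
  refine Finset.prod_le_prod' fun j _ => ?_
  split_ifs with hj
  · simpa using two_mul_card_conj_le hZ hj (h j)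
  · simpa using Finset.card_le_univ _

/-- Pullback of functions along `c`, as a homomorphism of pointwise groups. -/
def pullbackHom (K : Type) [Group K] {A B : Type} (c : A → B) : (B → K) →* (A → K) where
  toFun w := w ∘ c
  map_one' := rfl
  map_mul' _ _ := rfl

/-- Let `c_j = (h_k(j))_k ∈ Kᵗ` be the `j`-th column of the tuple `h`. Each `h_k` is `c` followed by the
`k`-th projection, so every element of `⟨h₁, …, h_t⟩` depends on `j` only through `c_j`. -/
lemma closure_le_range_pullbackHom {K : Type} [Group K] {n t : ℕ} (h : Fin t → Fin n → K) :
    Subgroup.closure (Set.range h) ≤ (pullbackHom K (fun j k => h k j)).range := by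
  rw [Subgroup.closure_le]
  rintro _ ⟨k, rfl⟩
  exact ⟨fun v => v k, rfl⟩

lemma card_closure_le {K : Type} [Group K] [Fintype K] {n t : ℕ} (h : Fin t → Fin n → K)
    [Fintype (Subgroup.closure (Set.range h))] :
    Fintype.card (Subgroup.closure (Set.range h)) ≤
      Fintype.card K ^ (Fintype.card K ^ t) := by
  rw [← Nat.card_eq_fintype_card]
  calc Nat.card (Subgroup.closure (Set.range h))
      ≤ Nat.card (pullbackHom K (fun j k => h k j)).range :=
        Nat.card_mono (Set.toFinite _) (closure_le_range_pullbackHom h)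
    _ ≤ Nat.card ((Fin t → K) → K) :=
        Nat.card_le_card_of_surjective _ (MonoidHom.rangeRestrict_surjective _)
    _ = _ := by simp

/-- The support of `g ∈ ⟨h₁, …, h_t⟩` is a union of fibers of the column map. -/
lemma card_fiber_le_card_support {K : Type} [Group K] [Fintype K] {n t : ℕ}
    (h : Fin t → Fin n → K) {g : Fin n → K} (hg : g ∈ Subgroup.closure (Set.range h))
    {j : Fin n} (hj : g j ≠ 1) :
    (Finset.univ.filter fun i => (fun k => h k i) = fun k => h k j).card ≤
      (Finset.univ.filter fun i => g i ≠ 1).card := by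
  obtain ⟨w, rfl⟩ := closure_le_range_pullbackHom h hg
  refine Finset.card_le_card fun i hi => ?_
  simp only [Finset.mem_filter, Finset.mem_univ, true_and] at hi ⊢
  change w (fun k => h k j) ≠ 1 at hj
  change w (fun k => h k i) ≠ 1
  rwa [hi]

/-- Plancherel mass of `X_H = 0`, given a uniform bound `C` on the proportion of elements of `G`
conjugating a given nontrivial `g ∈ H` to a given element. -/
lemma plancherel_le_of_card_le {G : Type} [Group G] [Fintype G] {ι : Type} [Fintype ι]
    (ρ : ι → FDRep ℂ G) (hirr : ∀ i, Simple (ρ i))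
    (hdisj : ∀ i j : ι, Nonempty (ρ i ≅ ρ j) → i = j)
    (hcomplete : ∀ V : FDRep ℂ G, Simple V → ∃ i, Nonempty (V ≅ ρ i))
    (H : Subgroup G) [Fintype H] {B C : ℝ} (hB : (Fintype.card H : ℝ) ≤ B) (hC0 : 0 ≤ C)
    (hC : ∀ g ∈ H, g ≠ 1 → ∀ x : G,
      (Nat.card {y : G // y * g * y⁻¹ = x} : ℝ) ≤ C * Fintype.card G) :
    ∑ i ∈ Finset.univ.filter (fun i : ι => ((Fintype.card H : ℂ)⁻¹ *
        ∑ x : H, (ρ i).character (x : G)) / (Module.finrank ℂ (ρ i) : ℂ) = 0),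
        ((Module.finrank ℂ (ρ i) : ℝ) ^ 2 / (Fintype.card G : ℝ)) ≤ B ^ 2 * C := by
  have hG : (0 : ℝ) < Fintype.card G := Nat.cast_pos.mpr Fintype.card_pos
  rw [← Finset.sum_div, div_le_iff₀ hG]
  refine (plancherel_sum_le ρ hirr hdisj hcomplete H).trans ?_
  calc _ ≤ ∑ g ∈ (Finset.univ : Finset H).erase 1, ∑ x : H, C * Fintype.card G := by
        refine Finset.sum_le_sum fun g hg => Finset.sum_le_sum fun x _ => ?_
        have hg1 : (g : G) ≠ 1 := by simpa using Finset.ne_of_mem_erase hg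
        have := hC g g.2 hg1 x
        rwa [Nat.card_eq_fintype_card, Fintype.card_subtype] at this
    _ ≤ ∑ g : H, ∑ x : H, C * Fintype.card G :=
        Finset.sum_le_sum_of_subset_of_nonneg (Finset.subset_univ _)
          fun _ _ _ => by positivity
    _ = (Fintype.card H : ℝ) ^ 2 * C * Fintype.card G := by
        simp only [Finset.sum_const, Finset.card_univ, nsmul_eq_mul]
        ring
    _ ≤ _ := by gcongr

/-- In `Kⁿ` a nontrivial `g` with at least `s` nontrivial coordinates has conjugator proportion at
most `2 ^ (-s)`. -/
lemma plancherel_le_of_good {K : Type} [Group K] [Fintype K] (hZ : Subgroup.center K = ⊥)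
    {n : ℕ} {ι : Type} [Fintype ι] (ρ : ι → FDRep ℂ (Fin n → K)) (hirr : ∀ i, Simple (ρ i))
    (hdisj : ∀ i j : ι, Nonempty (ρ i ≅ ρ j) → i = j)
    (hcomplete : ∀ V : FDRep ℂ (Fin n → K), Simple V → ∃ i, Nonempty (V ≅ ρ i))
    (H : Subgroup (Fin n → K)) [Fintype H] {s B : ℝ} (hB : (Fintype.card H : ℝ) ≤ B)
    (hs : ∀ g ∈ H, g ≠ 1 → s ≤ (Finset.univ.filter fun i => g i ≠ 1).card) :
    ∑ i ∈ Finset.univ.filter (fun i : ι => ((Fintype.card H : ℂ)⁻¹ *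
        ∑ x : H, (ρ i).character (x : Fin n → K)) / (Module.finrank ℂ (ρ i) : ℂ) = 0),
        ((Module.finrank ℂ (ρ i) : ℝ) ^ 2 / (Fintype.card (Fin n → K) : ℝ)) ≤
      B ^ 2 * (2 : ℝ) ^ (-s) := by
  refine plancherel_le_of_card_le ρ hirr hdisj hcomplete H hB (by positivity) ?_
  intro g hg hg1 x
  have h1 := card_conj_pi_le hZ g x
  rw [← Fintype.card_subtype (fun y : Fin n → K => y * g * y⁻¹ = x),
    ← Nat.card_eq_fintype_card (α := {y : Fin n → K // y * g * y⁻¹ = x})] at h1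
  have h2 := hs g hg hg1
  have h3 : (2 : ℝ) ^ s ≤ 2 ^ (Finset.univ.filter fun i => g i ≠ 1).card := by
    rw [← Real.rpow_natCast]
    exact Real.rpow_le_rpow_of_exponent_le one_le_two h2
  rw [Real.rpow_neg zero_le_two, inv_mul_eq_div, le_div_iff₀ (by positivity), mul_comm]
  refine (mul_le_mul_of_nonneg_right h3 (Nat.cast_nonneg _)).trans ?_
  exact_mod_cast h1

/-! ### Column fibers and numerical estimates -/

/-- Chernoff-type bound: counts the `c : Fin n → Q` whose fiber over `v` has fewer than `s` elements,
by Markov's inequality applied to `2 ^ (-N)` with `N` the size of that fiber. -/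
lemma card_small_fiber_le {Q : Type} [Fintype Q] [DecidableEq Q] {n : ℕ} (v : Q) (s : ℝ) :
    ((Finset.univ.filter fun c : Fin n → Q =>
      ((Finset.univ.filter fun j => c j = v).card : ℝ) < s).card : ℝ) ≤
      2 ^ s * ((Fintype.card Q : ℝ) - 1 / 2) ^ n := by
  have hsum : ∑ c : Fin n → Q, ∏ j, (if c j = v then (1 / 2 : ℝ) else 1) =
      ((Fintype.card Q : ℝ) - 1 / 2) ^ n := by
    have h1 : ∑ q : Q, (if q = v then (1 / 2 : ℝ) else 1) = (Fintype.card Q : ℝ) - 1 / 2 := by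
      have : ∀ q : Q, (if q = v then (1 / 2 : ℝ) else 1) = 1 - if q = v then 1 / 2 else 0 := by
        intro q; split_ifs <;> norm_num
      rw [Finset.sum_congr rfl fun q _ => this q, Finset.sum_sub_distrib]
      simp
    have h2 := Finset.prod_univ_sum (fun _ : Fin n => (Finset.univ : Finset Q))
      (fun _ q => if q = v then (1 / 2 : ℝ) else 1)
    rw [Fintype.piFinset_univ] at h2
    rw [← h2, h1]
    simp
  rw [← hsum, Finset.mul_sum, Finset.card_eq_sum_ones, Nat.cast_sum]
  calc _ ≤ ∑ c ∈ Finset.univ.filter fun c : Fin n → Q =>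
      ((Finset.univ.filter fun j => c j = v).card : ℝ) < s,
        2 ^ s * ∏ j, (if c j = v then (1 / 2 : ℝ) else 1) := by
        refine Finset.sum_le_sum fun c hc => ?_
        rw [Finset.mem_filter] at hc
        rw [Finset.prod_ite, Finset.prod_const_one, mul_one, Finset.prod_const, one_div, inv_pow,
          ← div_eq_mul_inv, Nat.cast_one, one_le_div (by positivity), ← Real.rpow_natCast]
        exact Real.rpow_le_rpow_of_exponent_le one_le_two hc.2.le
    _ ≤ _ := by
        refine Finset.sum_le_sum_of_subset_of_nonneg (Finset.filter_subset _ _) fun c _ _ => ?_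
        refine mul_nonneg (by positivity) (Finset.prod_nonneg fun j _ => ?_)
        split_ifs <;> norm_num

/-- With `b = (1 - log 2) / 2` the left-hand side is `(x e^{-bx})²`, and `x e^{-bx} ≤ 1 / (e b)`,
which is slightly less than `2.4`. -/
lemma sq_mul_le {x : ℝ} (hx : 0 ≤ x) : x ^ 2 * ((2 : ℝ) ^ x * Real.exp (-x)) ≤ 6 := by
  set b : ℝ := (1 - Real.log 2) / 2 with hb
  have hl : Real.log 2 < 0.6931471808 := Real.log_two_lt_d9
  have he : (2.7182818283 : ℝ) < Real.exp 1 := Real.exp_one_gt_d9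
  have h1 : (2 : ℝ) ^ x * Real.exp (-x) = Real.exp (-(b * x)) ^ 2 := by
    rw [Real.rpow_def_of_pos two_pos, ← Real.exp_add, ← Real.exp_nat_mul]
    congr 1
    rw [hb]
    push_cast
    ring
  have h2 : b * x * Real.exp (-(b * x)) ≤ Real.exp (-1) := by
    have := Real.add_one_le_exp (b * x - 1)
    rw [sub_add_cancel] at this
    calc b * x * Real.exp (-(b * x)) ≤ Real.exp (b * x - 1) * Real.exp (-(b * x)) := by gcongr
      _ = Real.exp (-1) := by rw [← Real.exp_add]; congr 1; ring
  have hb0 : 0.1534264 ≤ b := by rw [hb]; linarith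
  have h3 : x * Real.exp (-(b * x)) ≤ 2.4 := by
    have hy : 0 ≤ x * Real.exp (-(b * x)) := by positivity
    have h4 : Real.exp 1 * Real.exp (-1) = 1 := by rw [← Real.exp_add]; simp
    have h5 : Real.exp (-1) ≤ 0.36788 := by
      nlinarith [Real.exp_pos (-1)]
    nlinarith
  have hy : 0 ≤ x * Real.exp (-(b * x)) := by positivity
  rw [h1, ← mul_pow]
  nlinarith

/-- The hypothesis forces `α² < log 2 / log 3`, which is less than `2 / 3` since `2³ < 3²`. -/
lemma alpha_sq_lt {k α r : ℝ} (hα : 0 < α) (hr : 0 < r) (hk : 3 ≤ k)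
    (h : ((2 : ℝ) ^ (-(1 / α)) * k ^ α) ^ r < 1) : α ^ 2 < 2 / 3 := by
  have h1 : (2 : ℝ) ^ (-(1 / α)) * k ^ α < 1 := by
    by_contra! hc
    exact absurd (Real.one_le_rpow hc hr.le) h.not_ge
  have h2 : (3 : ℝ) ^ α < 2 ^ (1 / α) := by
    rw [Real.rpow_neg zero_le_two, inv_mul_lt_iff₀ (by positivity), mul_one] at h1
    exact (Real.rpow_le_rpow (by norm_num) hk hα.le).trans_lt h1
  have h3 : α * Real.log 3 < 1 / α * Real.log 2 := by
    have := Real.log_lt_log (by positivity) h2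
    rwa [Real.log_rpow (by norm_num), Real.log_rpow (by norm_num)] at this
  have h4 : 3 * Real.log 2 ≤ 2 * Real.log 3 := by
    have := Real.log_le_log (x := 2 ^ 3) (y := 3 ^ 2) (by norm_num) (by norm_num)
    rwa [Real.log_pow, Real.log_pow] at this
  have h5 : α ^ 2 * Real.log 3 < Real.log 2 := by
    have := mul_lt_mul_of_pos_left h3 hα
    calc α ^ 2 * Real.log 3 = α * (α * Real.log 3) := by ring
      _ < α * (1 / α * Real.log 2) := this
      _ = Real.log 2 := by field_simp
  have h6 : 0 < Real.log 3 := Real.log_pos (by norm_num)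
  nlinarith

/-- The union bound over the `M = |K|ᵗ` columns is absorbed by the first term of the main estimate. -/
lemma tail_le {M n α : ℝ} (hn : 0 < n) (hα : 0 < α) (hM : 2 * M ≤ α * Real.sqrt n)
    (hα2 : α ^ 2 < 2 / 3) :
    M * (2 ^ (Real.sqrt n / α) * Real.exp (-(Real.sqrt n / α))) ≤ 2 * α / Real.sqrt n := by
  have hs : 0 < Real.sqrt n := Real.sqrt_pos.mpr hn
  set r := Real.sqrt n
  have h := sq_mul_le (x := r / α) (by positivity)
  set E : ℝ := 2 ^ (r / α) * Real.exp (-(r / α)) with hE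
  have hE0 : 0 < E := by positivity
  rw [le_div_iff₀ hs]
  have h1 : r ^ 2 * E ≤ 6 * α ^ 2 := by
    have : (r / α) ^ 2 * E = r ^ 2 * E / α ^ 2 := by ring
    rwa [this, div_le_iff₀ (by positivity)] at h
  calc M * E * r ≤ (α * r / 2) * E * r := by gcongr; linarith
    _ = α / 2 * (r ^ 2 * E) := by ring
    _ ≤ α / 2 * 4 := by gcongr; linarith
    _ = 2 * α := by ring

lemma one_sub_pow_le {M r α : ℝ} {n : ℕ} (hM : 1 ≤ M) (hr : 0 < r) (hn : (n : ℝ) = r ^ 2)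
    (hα : 0 < α) (h : 2 * M ≤ α * r) :
    (M - 1 / 2) ^ n ≤ M ^ n * Real.exp (-(r / α)) := by
  have h1 : M - 1 / 2 ≤ M * Real.exp (-(1 / (2 * M))) := by
    have := Real.add_one_le_exp (-(1 / (2 * M)))
    calc M - 1 / 2 = M * (-(1 / (2 * M)) + 1) := by field_simp; ring
      _ ≤ _ := by gcongr
  calc (M - 1 / 2) ^ n ≤ (M * Real.exp (-(1 / (2 * M)))) ^ n :=
        pow_le_pow_left₀ (by linarith) h1 n
    _ = M ^ n * Real.exp (-(n / (2 * M))) := by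
        rw [mul_pow, ← Real.exp_nat_mul]; congr 2; ring
    _ ≤ _ := by
        have h2 : r / α ≤ n / (2 * M) := by
          rw [hn, div_le_div_iff₀ hα (by positivity)]
          nlinarith
        gcongr

/-! ### Tuples generating an element of small support -/

/-- A group of order two is abelian, hence equal to its center. -/
lemma three_le_card {K : Type} [Group K] [Fintype K] (hZ : Subgroup.center K = ⊥)
    [Nontrivial K] : 3 ≤ Fintype.card K := by
  obtain ⟨a, ha⟩ := exists_ne (1 : K)
  have h1 := Fintype.one_lt_card (α := K)
  by_contra! hlt
  have h2 : Fintype.card K = 2 := by omega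
  have := Fact.mk Nat.prime_two
  have hcyc : IsCyclic K := isCyclic_of_prime_card (p := 2) (by rw [Nat.card_eq_fintype_card, h2])
  have hmem : a ∈ Subgroup.center K :=
    Subgroup.mem_center_iff.mpr fun g => (IsCyclic.commGroup (α := K)).mul_comm g a
  rw [hZ, Subgroup.mem_bot] at hmem
  exact ha hmem

/-- Few tuples generate a subgroup containing a nontrivial element of small support: such an element
forces some column value that occurs to have a small fiber, and a union bound over `Kᵗ` applies. -/
lemma card_bad_le {K : Type} [Group K] [Fintype K] (hZ : Subgroup.center K = ⊥) {n t : ℕ}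
    (α : ℝ) (hα : 0 < α) (ht : 2 * (Fintype.card K : ℝ) ^ t ≤ α * Real.sqrt n)
    (hB : ((2 : ℝ) ^ (-(1 / α)) * (Fintype.card K : ℝ) ^ α) ^ (Real.sqrt n) < 1) :
    ((Finset.univ.filter fun h : Fin t → Fin n → K =>
      ¬ ∀ g ∈ Subgroup.closure (Set.range h), g ≠ 1 →
        Real.sqrt n / α ≤ (Finset.univ.filter fun i => g i ≠ 1).card).card : ℝ) ≤
      2 * α / Real.sqrt n * Fintype.card (Fin t → Fin n → K) := by
  set s := Real.sqrt n / α
  have hK0 : (0 : ℝ) < Fintype.card K := Nat.cast_pos.mpr Fintype.card_pos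
  have hr : 0 < Real.sqrt n := by
    by_contra! hc
    have : α * Real.sqrt n ≤ 0 := mul_nonpos_of_nonneg_of_nonpos hα.le hc
    have : 0 < (Fintype.card K : ℝ) ^ t := by positivity
    linarith
  rcases subsingleton_or_nontrivial K with hK | hK
  · rw [Finset.filter_false_of_mem]
    · simp only [Finset.card_empty, Nat.cast_zero]
      positivity
    · intro h _ hh
      exact hh fun g _ hg => absurd (Subsingleton.elim g 1) hg
  have hn : (0 : ℝ) < n := Real.sqrt_pos.mp hr
  set M : ℝ := (Fintype.card K : ℝ) ^ t with hMdef
  have hQ : (Fintype.card (Fin t → K) : ℝ) = M := by simp [hMdef]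
  have hM1 : 1 ≤ M := one_le_pow₀ (by exact_mod_cast Fintype.card_pos)
  have hα2 := alpha_sq_lt hα hr (by exact_mod_cast three_le_card hZ) hB
  have htail := tail_le hn hα ht hα2
  have hcard : (Fintype.card (Fin t → Fin n → K) : ℝ) = M ^ n := by
    simp [hMdef]
    rw [← pow_mul, ← pow_mul, mul_comm]
  have hsub : (Finset.univ.filter fun h : Fin t → Fin n → K =>
      ¬ ∀ g ∈ Subgroup.closure (Set.range h), g ≠ 1 →
        s ≤ (Finset.univ.filter fun i => g i ≠ 1).card).card ≤
      ∑ v : Fin t → K, (Finset.univ.filter fun c : Fin n → Fin t → K =>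
        ((Finset.univ.filter fun j => c j = v).card : ℝ) < s).card := by
    refine le_trans ?_ Finset.card_biUnion_le
    -- Transpose the tuple into its sequence of columns.
    refine Finset.card_le_card_of_injOn (fun h j k => h k j) ?_ ?_
    · intro h hh
      simp only [Finset.coe_filter, Finset.mem_univ, true_and, Set.mem_ofPred_eq] at hh
      push Not at hh
      obtain ⟨g, hg, hg1, hlt⟩ := hh
      obtain ⟨j, hj⟩ := Function.ne_iff.mp hg1
      simp only [Finset.coe_biUnion, Set.mem_iUnion, Finset.coe_filter, Finset.mem_univ, true_and,
        Set.mem_ofPred_eq, Finset.coe_univ, Set.mem_univ, exists_prop]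
      refine ⟨fun k => h k j, lt_of_le_of_lt ?_ hlt⟩
      exact_mod_cast card_fiber_le_card_support h hg hj
    · intro h _ h' _ e
      funext k j
      exact congrFun (congrFun e j) k
  calc _ ≤ ∑ v : Fin t → K, ((Finset.univ.filter fun c : Fin n → Fin t → K =>
        ((Finset.univ.filter fun j => c j = v).card : ℝ) < s).card : ℝ) := by
        exact_mod_cast hsub
    _ ≤ ∑ v : Fin t → K, 2 ^ s * (M ^ n * Real.exp (-s)) := by
        refine Finset.sum_le_sum fun v _ => (card_small_fiber_le v s).trans ?_
        rw [hQ]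
        gcongr
        exact one_sub_pow_le hM1 hr (Real.sq_sqrt hn.le).symm hα ht
    _ = M * (2 ^ s * Real.exp (-s)) * M ^ n := by
        rw [Finset.sum_const, Finset.card_univ, nsmul_eq_mul, hQ]
        ring
    _ ≤ _ := by
        rw [hcard]
        gcongr

/-- With `m = |K|ᵗ` this turns the bound `|H|² 2 ^ (-√n / α)` for good tuples into the second term of
the main estimate. -/
lemma bound_le {k α r : ℝ} {m : ℕ} (hk : 1 ≤ k) (h : 2 * (m : ℝ) ≤ α * r) :
    (k ^ m) ^ 2 * (2 : ℝ) ^ (-(r / α)) ≤ ((2 : ℝ) ^ (-(1 / α)) * k ^ α) ^ r := by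
  have hk0 : 0 < k := by linarith
  rw [Real.mul_rpow (by positivity) (by positivity), ← Real.rpow_mul zero_le_two,
    ← Real.rpow_mul hk0.le, mul_comm]
  have : -(1 / α) * r = -(r / α) := by ring
  rw [this, ← pow_mul, ← Real.rpow_natCast]
  gcongr
  push_cast
  linarith

/-- Let `K` be a finite group with trivial center, `G = Kⁿ`, and let
`t`, `α > 0` satisfy `2|K|^t ≤ α√n`. Let `h₁, …, h_t` be independent uniform elements of
`G` generating `H`, and let `ρ` be a Plancherel-random irreducible representation of `G`
(chosen independently). With `X_H = ⟨Res_H χ_ρ, 1⟩_H / d_ρ`, the joint probability that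
`X_H = 0` is at most `2α/√n + (2^(−1/α) |K|^α)^(√n)`. -/
theorem prob_trivial_multiplicity_zero_le_of_product_group
    {K : Type} [Group K] [Fintype K] (hZ : Subgroup.center K = ⊥)
    {n t : ℕ} (α : ℝ) (hα : 0 < α)
    (ht : 2 * (Fintype.card K : ℝ) ^ t ≤ α * Real.sqrt n)
    (ι : Type) [Fintype ι] (ρ : ι → FDRep ℂ (Fin n → K))
    (hirr : ∀ i, Simple (ρ i))
    (hdisj : ∀ i j : ι, Nonempty (ρ i ≅ ρ j) → i = j)
    (hcomplete : ∀ V : FDRep ℂ (Fin n → K), Simple V → ∃ i, Nonempty (V ≅ ρ i)) :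
    (∑ h : Fin t → (Fin n → K),
        ∑ i ∈ Finset.univ.filter (fun i : ι =>
            ((Fintype.card (Subgroup.closure (Set.range h)) : ℂ)⁻¹ *
                ∑ x : (Subgroup.closure (Set.range h) : Subgroup (Fin n → K)),
                  (ρ i).character (x : Fin n → K)) /
              (Module.finrank ℂ (ρ i) : ℂ) = 0),
          ((Module.finrank ℂ (ρ i) : ℝ) ^ 2 / (Fintype.card (Fin n → K) : ℝ))) /
        (Fintype.card (Fin t → Fin n → K) : ℝ)
      ≤ 2 * α / Real.sqrt n +
          ((2 : ℝ) ^ (-(1 / α)) * (Fintype.card K : ℝ) ^ α) ^ (Real.sqrt n) := by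
  set B := ((2 : ℝ) ^ (-(1 / α)) * (Fintype.card K : ℝ) ^ α) ^ (Real.sqrt n) with hB
  set good : (Fin t → Fin n → K) → Prop := fun h =>
    ∀ g ∈ Subgroup.closure (Set.range h), g ≠ 1 →
      Real.sqrt n / α ≤ (Finset.univ.filter fun i => g i ≠ 1).card with hgood
  have hT : (0 : ℝ) < Fintype.card (Fin t → Fin n → K) := Nat.cast_pos.mpr Fintype.card_pos
  have hG : (0 : ℝ) < Fintype.card (Fin n → K) := Nat.cast_pos.mpr Fintype.card_pos
  have hB0 : 0 ≤ B := by positivity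
  set P : (Fin t → Fin n → K) → ℝ := fun h =>
    ∑ i ∈ Finset.univ.filter (fun i : ι =>
            ((Fintype.card (Subgroup.closure (Set.range h)) : ℂ)⁻¹ *
                ∑ x : (Subgroup.closure (Set.range h) : Subgroup (Fin n → K)),
                  (ρ i).character (x : Fin n → K)) /
              (Module.finrank ℂ (ρ i) : ℂ) = 0),
          ((Module.finrank ℂ (ρ i) : ℝ) ^ 2 / (Fintype.card (Fin n → K) : ℝ)) with hP
  change (∑ h, P h) / _ ≤ _
  rw [div_le_iff₀ hT]
  have hP1 : ∀ h, P h ≤ 1 := by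
    intro h
    calc P h ≤ ∑ i, (Module.finrank ℂ (ρ i) : ℝ) ^ 2 / (Fintype.card (Fin n → K) : ℝ) :=
          Finset.sum_le_sum_of_subset_of_nonneg (Finset.filter_subset _ _)
            fun _ _ _ => by positivity
      _ = 1 := by
          rw [← Finset.sum_div, sum_finrank_sq ρ hirr hdisj hcomplete, div_self hG.ne']
  have hK1 : (1 : ℝ) ≤ Fintype.card K := by exact_mod_cast Fintype.card_pos
  have hPgood : ∀ h, good h → P h ≤ B := by
    intro h hh
    have hcard : (Fintype.card (Subgroup.closure (Set.range h)) : ℝ) ≤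
        (Fintype.card K : ℝ) ^ (Fintype.card K ^ t) := by
      exact_mod_cast card_closure_le h
    exact (plancherel_le_of_good hZ ρ hirr hdisj hcomplete _ hcard hh).trans
      (bound_le hK1 (by push_cast; exact ht))
  -- When `B ≥ 1` the estimate is trivial; otherwise `B < 1` bounds `α`, as `card_bad_le` needs.
  by_cases hB1 : 1 ≤ B
  · calc ∑ h, P h ≤ ∑ h : Fin t → Fin n → K, (1 : ℝ) := Finset.sum_le_sum fun h _ => hP1 h
      _ = 1 * (Fintype.card (Fin t → Fin n → K) : ℝ) := by simp
      _ ≤ _ := by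
          gcongr
          have : 0 ≤ 2 * α / Real.sqrt n := by positivity
          linarith
  · have hbad := card_bad_le hZ α hα ht (not_le.mp hB1)
    have hle : ∀ h, P h ≤ (if ¬ good h then 1 else 0) + B := by
      intro h
      split_ifs with hh
      · linarith [hPgood h hh]
      · linarith [hP1 h]
    calc ∑ h, P h ≤ ∑ h : Fin t → Fin n → K, ((if ¬ good h then (1 : ℝ) else 0) + B) :=
          Finset.sum_le_sum fun h _ => hle h
      _ = ((Finset.univ.filter fun h => ¬ good h).card : ℝ) +
            B * Fintype.card (Fin t → Fin n → K) := by
          rw [Finset.sum_add_distrib, Finset.sum_boole, Finset.sum_const, Finset.card_univ,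
            nsmul_eq_mul, mul_comm B]
      _ ≤ _ := by
          rw [add_mul]
          gcongr
end
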